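/- arXiv:1812.00153 — 3 statements merged into one kernel-verified Lean document; each statement's English description precedes it below -/
import Mathlib

section
/- Let C > 0 be fixed. Then for every dimension d ≥ 1 and every real number N ≥ Cd, the number of lattice points in the Euclidean ball of radius N satisfies #(B²_N ∩ ℤ^d) ≤ 2 e^{1/(8C²)} |B²_N|, where |B²_N| is the Lebesgue measure of the Euclidean ball of radius N. -/
open MeasureTheory ENNReal

def cubeHalf (d : ℕ) (y : Fin d → ℤ) : Set (Fin d → ℝ) :=
  (Set.univ.pi fun _ => Set.Ioo (-(1/2) : ℝ) (1/2)) ∩ {x | ∑ i, (y i : ℝ) * x i ≤ 0}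

lemma cubeHalf_meas (d : ℕ) (y : Fin d → ℤ) : MeasurableSet (cubeHalf d y) := by
  apply MeasurableSet.inter
  · exact MeasurableSet.univ_pi fun _ => measurableSet_Ioo
  · exact measurableSet_le (by fun_prop) (by fun_prop)

lemma cubeHalf_vol (d : ℕ) (y : Fin d → ℤ) : 1 ≤ 2 * volume (cubeHalf d y) := by
  have h1 : volume (Set.univ.pi fun _ : Fin d => Set.Ioo (-(1/2) : ℝ) (1/2)) = 1 := by
    rw [Real.volume_pi_Ioo]
    norm_num
  have h2 : (Set.univ.pi fun _ : Fin d => Set.Ioo (-(1/2) : ℝ) (1/2)) ⊆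
      cubeHalf d y ∪ -(cubeHalf d y) := by
    intro x hx
    rcases le_total (∑ i, (y i : ℝ) * x i) 0 with h | h
    · exact Or.inl ⟨hx, h⟩
    · right
      refine ⟨fun i hi => ?_, ?_⟩
      · have := hx i hi
        simp only [Set.mem_Ioo, Pi.neg_apply] at this ⊢
        constructor <;> linarith [this.1, this.2]
      · simpa using h
  calc (1 : ℝ≥0∞) = _ := h1.symm
    _ ≤ _ := measure_mono h2
    _ ≤ _ := measure_union_le _ _
    _ = _ := by rw [Measure.measure_neg, two_mul]

lemma card_le_vol (d : ℕ) (N : ℝ) :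
    (Nat.card {y : Fin d → ℤ // (∑ i, ((y i : ℝ)) ^ 2) ≤ N ^ 2} : ℝ≥0∞) ≤
      2 * volume {x : Fin d → ℝ | ∑ i, x i ^ 2 ≤ N ^ 2 + d / 4} := by
  set T := {y : Fin d → ℤ // (∑ i, ((y i : ℝ)) ^ 2) ≤ N ^ 2}
  let A : T → Set (Fin d → ℝ) := fun y => (fun x => x - fun i => (y.1 i : ℝ)) ⁻¹' cubeHalf d y.1
  have hvol : ∀ y, volume (A y) = volume (cubeHalf d y.1) := by
    intro y
    simp only [A, sub_eq_add_neg]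
    exact measure_preimage_add_right _ _ _
  have hmeas : ∀ y, MeasurableSet (A y) := fun y =>
    (cubeHalf_meas d y.1).preimage (by fun_prop)
  have hdisj : Pairwise (Function.onFun Disjoint A) := by
    intro y z hyz
    rw [Function.onFun, Set.disjoint_left]
    intro x hx hz
    apply hyz
    apply Subtype.ext
    funext i
    have a := hx.1 i trivial
    have b := hz.1 i trivial
    simp only [Set.mem_Ioo, Pi.sub_apply] at a b
    have h1 : (y.1 i : ℝ) < z.1 i + 1 := by linarith [a.1, a.2, b.1, b.2]
    have h2 : (z.1 i : ℝ) < y.1 i + 1 := by linarith [a.1, a.2, b.1, b.2]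
    norm_cast at h1 h2
    omega
  have hsub : (⋃ y, A y) ⊆ {x : Fin d → ℝ | ∑ i, x i ^ 2 ≤ N ^ 2 + d / 4} := by
    intro x hx
    obtain ⟨y, hy⟩ := Set.mem_iUnion.1 hx
    have h0 := y.2
    have h1 : ∑ i, (y.1 i : ℝ) * (x i - y.1 i) ≤ 0 := hy.2
    have h2 : ∑ i, (x i - y.1 i) ^ 2 ≤ ∑ i : Fin d, (1/4 : ℝ) := by
      apply Finset.sum_le_sum
      intro i _
      have a := hy.1 i trivial
      simp only [Set.mem_Ioo, Pi.sub_apply] at a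
      nlinarith [a.1, a.2]
    have h3 : ∑ i, x i ^ 2 = ∑ i, (y.1 i : ℝ) ^ 2 + 2 * ∑ i, (y.1 i : ℝ) * (x i - y.1 i)
        + ∑ i, (x i - y.1 i) ^ 2 := by
      rw [Finset.mul_sum, ← Finset.sum_add_distrib, ← Finset.sum_add_distrib]
      exact Finset.sum_congr rfl fun i _ => by ring
    simp only [Finset.sum_const, Finset.card_univ, Fintype.card_fin, nsmul_eq_mul] at h2
    rw [Set.mem_ofPred_eq, h3]
    linarith
  rcases finite_or_infinite T with hT | hT
  · have := Fintype.ofFinite T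
    calc (Nat.card T : ℝ≥0∞) = ∑' _ : T, (1 : ℝ≥0∞) := by simp
      _ ≤ ∑' y : T, 2 * volume (A y) :=
          ENNReal.tsum_le_tsum fun y => by rw [hvol]; exact cubeHalf_vol d y.1
      _ = 2 * volume (⋃ y, A y) := by
          rw [ENNReal.tsum_mul_left, measure_iUnion hdisj hmeas]
      _ ≤ _ := by gcongr
  · simp

/-- Let `C > 0`. For every dimension `d ≥ 1` and every real `N ≥ Cd`, the number of lattice
points in the Euclidean ball `B²_N` is at most `2 e^{1/(8C²)} |B²_N|`. -/
theorem statement16 (C : ℝ) (hC : 0 < C) (d : ℕ) (hd : 1 ≤ d) (N : ℝ)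
    (hN : C * d ≤ N) :
    (Nat.card {y : Fin d → ℤ // (∑ i, ((y i : ℝ)) ^ 2) ≤ N ^ 2} : ℝ≥0∞)
      ≤ ENNReal.ofReal (2 * Real.exp (1 / (8 * C ^ 2))) *
          volume (Metric.closedBall (0 : EuclideanSpace ℝ (Fin d)) N) := by
  have hd' : (1 : ℝ) ≤ d := by exact_mod_cast hd
  have hCd : 0 < C * d := by positivity
  have hN0 : 0 < N := by linarith
  set R := Real.sqrt (N ^ 2 + d / 4) with hR
  have hR0 : 0 ≤ R := Real.sqrt_nonneg _
  have hR2 : R ^ 2 = N ^ 2 + d / 4 := Real.sq_sqrt (by positivity)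
  have hS : volume {x : Fin d → ℝ | ∑ i, x i ^ 2 ≤ N ^ 2 + d / 4} =
      volume (Metric.closedBall (0 : EuclideanSpace ℝ (Fin d)) R) := by
    rw [← (EuclideanSpace.volume_preserving_symm_measurableEquiv_toLp
      (Fin d)).measure_preimage_equiv]
    congr 1
    ext x
    simp only [Set.mem_preimage, Set.mem_ofPred_eq, mem_closedBall_zero_iff,
      EuclideanSpace.norm_eq, hR]
    rw [Real.sqrt_le_sqrt_iff (by positivity)]
    simp
  have hpow : R ^ d ≤ Real.exp (1 / (8 * C ^ 2)) * N ^ d := by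
    have hx : 1 + d / (4 * N ^ 2) ≤ Real.exp (d / (4 * N ^ 2)) := by
      linarith [Real.add_one_le_exp ((d : ℝ) / (4 * N ^ 2))]
    refine le_of_sq_le_sq ?_ (by positivity)
    calc (R ^ d) ^ 2 = (N ^ 2 * (1 + d / (4 * N ^ 2))) ^ d := by
          rw [← pow_mul, mul_comm, pow_mul, hR2]; congr 1; field_simp
      _ ≤ (N ^ 2 * Real.exp (d / (4 * N ^ 2))) ^ d := by gcongr
      _ = Real.exp (d * (d / (4 * N ^ 2))) * (N ^ d) ^ 2 := by
          rw [mul_pow, Real.exp_nat_mul]; ring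
      _ ≤ Real.exp (2 * (1 / (8 * C ^ 2))) * (N ^ d) ^ 2 := by
          refine mul_le_mul_of_nonneg_right (Real.exp_le_exp.2 ?_) (by positivity)
          have : (C * d) ^ 2 ≤ N ^ 2 := by gcongr
          rw [← mul_div_assoc, ← mul_div_assoc, div_le_div_iff₀ (by positivity) (by positivity)]
          nlinarith
      _ = _ := by rw [mul_pow, ← Real.exp_nat_mul]; norm_num
  refine (card_le_vol d N).trans ?_
  rw [hS, Measure.addHaar_closedBall _ _ hR0, Measure.addHaar_closedBall _ _ hN0.le,
    finrank_euclideanSpace_fin, ← mul_assoc, ← mul_assoc, ← ENNReal.ofReal_mul (by positivity)]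
  gcongr
  rw [← ENNReal.ofReal_ofNat, ← ENNReal.ofReal_mul (by positivity)]
  apply ENNReal.ofReal_le_ofReal
  linarith
end

section
/- Let C > 0 be fixed, let d ≥ 1, let N ≥ Cd be a real number, and let t > 0. Then for every x ∈ ℝ^d with |x|₂ ≥ N(1 + t/N)^{1/2} one has |Q ∩ (B²_N − x)| = |{y ∈ Q : x + y ∈ B²_N}| ≤ 2 e^{−ct²}, where c = (7/32) · C²/(C+1)². -/
open MeasureTheory

lemma aux_hoeffding (d : ℕ) (x : Fin d → ℝ) (s : ℝ) (hs : 0 ≤ s) :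
    volume {y : Fin d → ℝ | (∀ i, y i ∈ Set.Icc (-(1 / 2) : ℝ) (1 / 2)) ∧
        s ≤ ∑ i, (-x i) * y i}
      ≤ ENNReal.ofReal (Real.exp (-s ^ 2 / (2 * ∑ i, (x i) ^ 2 * (1 / 4)))) := by
  set μ : Measure ℝ := volume.restrict (Set.Icc (-(1 / 2) : ℝ) (1 / 2)) with hμ
  have : IsProbabilityMeasure μ := ⟨by simp [hμ]; norm_num⟩
  have hsub : ∀ i ∈ (Finset.univ : Finset (Fin d)), ProbabilityTheory.HasSubgaussianMGF
      (fun ω : Fin d → ℝ => (-x i) * ω i)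
      (NNReal.mk ((-x i) ^ 2) (sq_nonneg _) * (‖(1 / 2 : ℝ) - (-(1 / 2))‖₊ / 2) ^ 2)
      (Measure.pi fun _ : Fin d => μ) := by
    intro i _
    refine ProbabilityTheory.HasSubgaussianMGF.const_mul ?_ (-x i)
    have h1 : ProbabilityTheory.HasSubgaussianMGF (id : ℝ → ℝ)
        ((‖(1 / 2 : ℝ) - (-(1 / 2))‖₊ / 2) ^ 2) μ := by
      apply ProbabilityTheory.hasSubgaussianMGF_of_mem_Icc_of_integral_eq_zero
      · exact aemeasurable_id
      · exact ae_restrict_mem measurableSet_Icc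
      · rw [hμ, integral_Icc_eq_integral_Ioc, ← intervalIntegral.integral_of_le (by norm_num)]
        simp
    have hmp := measurePreserving_eval (fun _ : Fin d => μ) i
    rw [← hmp.map_eq] at h1
    exact (ProbabilityTheory.HasSubgaussianMGF.id_map_iff hmp.measurable.aemeasurable).1 h1
  have hind : ProbabilityTheory.iIndepFun (fun i (ω : Fin d → ℝ) => (-x i) * ω i)
      (Measure.pi fun _ : Fin d => μ) :=
    ProbabilityTheory.iIndepFun_pi (X := fun i (z : ℝ) => (-x i) * z)
      (fun i => by fun_prop)
  have key := ProbabilityTheory.HasSubgaussianMGF.measure_sum_ge_le_of_iIndepFun hind hsub hs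
  have hset : {y : Fin d → ℝ | (∀ i, y i ∈ Set.Icc (-(1 / 2) : ℝ) (1 / 2)) ∧
        s ≤ ∑ i, (-x i) * y i} = {y | s ≤ ∑ i, (-x i) * y i} ∩
          (Set.univ.pi fun _ => Set.Icc (-(1 / 2) : ℝ) (1 / 2)) := by
    ext y; simp only [Set.mem_ofPred_eq, Set.mem_inter_iff, Set.mem_univ_pi]; tauto
  have hm : MeasurableSet {y : Fin d → ℝ | s ≤ ∑ i, (-x i) * y i} :=
    measurableSet_le (by fun_prop) (by fun_prop)
  rw [hset, ← Measure.restrict_apply hm, volume_pi, Measure.restrict_pi_pi]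
  rw [← ofReal_measureReal]
  apply ENNReal.ofReal_le_ofReal
  refine key.trans_eq ?_
  congr 3
  push_cast
  refine Finset.sum_congr rfl fun i _ => ?_
  rw [Real.norm_eq_abs, abs_of_pos (by norm_num)]
  ring

theorem statement17 (C : ℝ) (hC : 0 < C) (d : ℕ) (hd : 1 ≤ d) (N t : ℝ)
    (hN : C * d ≤ N) (ht : 0 < t) (x : EuclideanSpace ℝ (Fin d))
    (hx : N * Real.sqrt (1 + t / N) ≤ ‖x‖) :
    volume {y : EuclideanSpace ℝ (Fin d) |
        (∀ i, y i ∈ Set.Icc (-(1 / 2) : ℝ) (1 / 2)) ∧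
          x + y ∈ Metric.closedBall (0 : EuclideanSpace ℝ (Fin d)) N}
      ≤ ENNReal.ofReal (2 * Real.exp (-(7 / 32 * C ^ 2 / (C + 1) ^ 2) * t ^ 2)) := by
  rcases Set.eq_empty_or_nonempty {y : EuclideanSpace ℝ (Fin d) |
        (∀ i, y i ∈ Set.Icc (-(1 / 2) : ℝ) (1 / 2)) ∧
          x + y ∈ Metric.closedBall (0 : EuclideanSpace ℝ (Fin d)) N} with he | ⟨y0, hy0, hy0b⟩
  · rw [he]; simp
  have hD : (1 : ℝ) ≤ d := by exact_mod_cast hd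
  have hNpos : 0 < N := lt_of_lt_of_le (by positivity) hN
  have hr2 : N ^ 2 + t * N ≤ ‖x‖ ^ 2 := by
    have h0 : 0 ≤ 1 + t / N := by positivity
    have := pow_le_pow_left₀ (by positivity) hx 2
    rw [mul_pow, Real.sq_sqrt h0] at this
    have e : N ^ 2 * (1 + t / N) = N ^ 2 + t * N := by field_simp
    linarith
  have hrpos : 0 < ‖x‖ := lt_of_lt_of_le (by positivity) hx
  have hy0n : ‖y0‖ ≤ d / 2 := by
    have h1 : ‖y0‖ ^ 2 ≤ (d : ℝ) * (1 / 4) := by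
      rw [EuclideanSpace.real_norm_sq_eq]
      calc ∑ i, y0 i ^ 2 ≤ ∑ i : Fin d, (1 / 4 : ℝ) := by
            apply Finset.sum_le_sum
            intro i _
            obtain ⟨h1, h2⟩ := hy0 i
            nlinarith
        _ = _ := by simp
    apply abs_le_of_sq_le_sq' _ (by positivity) |>.2
    nlinarith
  have hrN : ‖x‖ ≤ N + d / 2 := by
    have h1 : ‖x + y0‖ ≤ N := by simpa using hy0b
    have h2 : ‖x‖ ≤ ‖x + y0‖ + ‖y0‖ := by
      simpa using norm_sub_le (x + y0) y0
    linarith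
  have hCr : C * ‖x‖ ≤ N * (C + 1) := by nlinarith
  set s : ℝ := (‖x‖ ^ 2 - N ^ 2) / 2 with hs
  have hs0 : t * N / 2 ≤ s := by rw [hs]; linarith
  have hspos : 0 < s := lt_of_lt_of_le (by positivity) hs0
  have hsum : ∑ i, (x i) ^ 2 = ‖x‖ ^ 2 := (EuclideanSpace.real_norm_sq_eq x).symm
  have hexp : -s ^ 2 / (2 * ∑ i, (x i) ^ 2 * (1 / 4)) ≤
      -(7 / 32 * C ^ 2 / (C + 1) ^ 2) * t ^ 2 := by
    rw [← Finset.sum_mul, hsum]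
    have h1 : t * (C * ‖x‖) ≤ 2 * s * (C + 1) := by
      calc t * (C * ‖x‖) ≤ t * (N * (C + 1)) := by gcongr
        _ = (t * N / 2) * (2 * (C + 1)) := by ring
        _ ≤ s * (2 * (C + 1)) := by gcongr
        _ = _ := by ring
    have h2 := pow_le_pow_left₀ (by positivity) h1 2
    have h3 : 7 / 32 * C ^ 2 / (C + 1) ^ 2 * t ^ 2 ≤ s ^ 2 / (2 * (‖x‖ ^ 2 * (1 / 4))) := by
      rw [div_mul_eq_mul_div, div_le_div_iff₀ (by positivity) (by positivity)]
      have : 0 ≤ s ^ 2 * (C + 1) ^ 2 := by positivity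
      nlinarith
    rw [neg_div]
    linarith
  have hmp := PiLp.volume_preserving_ofLp (Fin d)
  have hle : volume {y : EuclideanSpace ℝ (Fin d) |
        (∀ i, y i ∈ Set.Icc (-(1 / 2) : ℝ) (1 / 2)) ∧
          x + y ∈ Metric.closedBall (0 : EuclideanSpace ℝ (Fin d)) N} ≤
      volume {y : Fin d → ℝ | (∀ i, y i ∈ Set.Icc (-(1 / 2) : ℝ) (1 / 2)) ∧
        s ≤ ∑ i, (-x i) * y i} := by
    have hmeas : MeasurableSet {y : Fin d → ℝ | (∀ i, y i ∈ Set.Icc (-(1 / 2) : ℝ) (1 / 2)) ∧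
        s ≤ ∑ i, (-x i) * y i} := by
      have e : {y : Fin d → ℝ | (∀ i, y i ∈ Set.Icc (-(1 / 2) : ℝ) (1 / 2)) ∧
        s ≤ ∑ i, (-x i) * y i} = {y | s ≤ ∑ i, (-x i) * y i} ∩
          (Set.univ.pi fun _ => Set.Icc (-(1 / 2) : ℝ) (1 / 2)) := by
        ext y; simp only [Set.mem_ofPred_eq, Set.mem_inter_iff, Set.mem_univ_pi]; tauto
      have hm : MeasurableSet {y : Fin d → ℝ | s ≤ ∑ i, (-x i) * y i} :=
        measurableSet_le (by fun_prop) (by fun_prop)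
      rw [e]
      exact hm.inter (MeasurableSet.univ_pi fun _ => measurableSet_Icc)
    rw [← hmp.measure_preimage hmeas.nullMeasurableSet]
    apply measure_mono
    rintro y ⟨hy, hyb⟩
    refine ⟨hy, ?_⟩
    have h1 : ‖x + y‖ ≤ N := by simpa using hyb
    have h2 := pow_le_pow_left₀ (norm_nonneg _) h1 2
    rw [EuclideanSpace.real_norm_sq_eq] at h2
    have h3 : ∑ i, (x + y) i ^ 2 = ∑ i, x i ^ 2 - 2 * ∑ i, (-x i) * y i + ∑ i, y i ^ 2 := by
      rw [Finset.mul_sum, ← Finset.sum_sub_distrib, ← Finset.sum_add_distrib]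
      apply Finset.sum_congr rfl
      intro i _
      simp only [PiLp.add_apply]
      ring
    have h4 : 0 ≤ ∑ i, y i ^ 2 := Finset.sum_nonneg fun i _ => sq_nonneg _
    rw [h3, hsum] at h2
    rw [hs]
    linarith
  refine hle.trans ((aux_hoeffding d x s hspos.le).trans ?_)
  apply ENNReal.ofReal_le_ofReal
  have := Real.exp_le_exp.2 hexp
  have := Real.exp_pos (-(7 / 32 * C ^ 2 / (C + 1) ^ 2) * t ^ 2)
  linarith
end

section
/- There exist absolute constants C₁, C₂ > 0, independent of the dimension, such that for every dimension d ≥ 1 and every real number N ≥ C₁ d, the Lebesgue measure of the Euclidean ball of radius N is controlled by its lattice point count: |B²_N| ≤ C₂ · #(B²_N ∩ ℤ^d). -/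
open MeasureTheory ENNReal

lemma aux_fract_int : IntervalIntegrable (fun u : ℝ => Int.fract u) volume 0 1 := by
  apply IntervalIntegrable.mono_fun' (g := fun _ => (1:ℝ)) (by simp)
  · exact measurable_fract.aestronglyMeasurable
  · filter_upwards with u
    rw [Real.norm_eq_abs, abs_of_nonneg (Int.fract_nonneg _)]
    exact (Int.fract_lt_one _).le

lemma aux_mean (x : ℝ) :
    ∫ u, ((⌊x + u⌋ : ℝ) - x) ∂(volume.restrict (Set.Ico (0:ℝ) 1)) = 0 := by
  have e : ∀ u : ℝ, ((⌊x + u⌋ : ℝ) - x) = u - Int.fract (x + u) := by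
    intro u; rw [Int.fract]; ring
  simp_rw [e]
  rw [integral_Ico_eq_integral_Ioc, ← intervalIntegral.integral_of_le zero_le_one]
  have hp : Function.Periodic (Int.fract : ℝ → ℝ) 1 := fun u => Int.fract_add_one u
  have hI : IntervalIntegrable (fun u : ℝ => Int.fract (x + u)) volume 0 1 := by
    apply IntervalIntegrable.mono_fun' (g := fun _ => (1:ℝ)) (by simp)
    · exact (measurable_fract.comp (measurable_const_add x)).aestronglyMeasurable
    · filter_upwards with u
      rw [Real.norm_eq_abs, abs_of_nonneg (Int.fract_nonneg _)]
      exact (Int.fract_lt_one _).le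
  rw [intervalIntegral.integral_sub (by simp) hI, intervalIntegral.integral_comp_add_left]
  have h1 := hp.intervalIntegral_add_eq x 0
  simp only [add_zero, zero_add] at h1 ⊢
  rw [h1, sub_eq_zero]
  rw [intervalIntegral.integral_of_le zero_le_one, intervalIntegral.integral_of_le zero_le_one,
    ← integral_Ico_eq_integral_Ioc, ← integral_Ico_eq_integral_Ioc]
  apply setIntegral_congr_fun measurableSet_Ico
  intro u hu
  exact (Int.fract_eq_self.2 ⟨hu.1, hu.2⟩).symm

instance aux_prob : IsProbabilityMeasure (volume.restrict (Set.Ico (0:ℝ) 1)) :=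
  ⟨by simp⟩

/-- The uniform measure on the unit cube. -/
noncomputable def auxP (d : ℕ) : Measure (Fin d → ℝ) :=
  Measure.pi (fun _ => volume.restrict (Set.Ico (0:ℝ) 1))

instance aux_prob2 (d : ℕ) : IsProbabilityMeasure (auxP d) := by
  unfold auxP; infer_instance

lemma aux_abs (x u : ℝ) (hu : u ∈ Set.Ico (0:ℝ) 1) : |(⌊x + u⌋ : ℝ) - x| ≤ 1 := by
  have h1 := Int.floor_le (x + u)
  have h2 := Int.lt_floor_add_one (x + u)
  rw [abs_le]; constructor <;> linarith [hu.1, hu.2]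

lemma aux_meas (x : ℝ) : Measurable (fun u : ℝ => x * ((⌊x + u⌋ : ℝ) - x)) := by
  have : Measurable (fun u : ℝ => (⌊x + u⌋ : ℝ)) :=
    (measurable_from_top (f := fun n : ℤ => (n:ℝ))).comp
      (Int.measurable_floor.comp (measurable_const_add x))
  fun_prop

lemma aux_bd (x : ℝ) : ∀ᵐ u ∂(volume.restrict (Set.Ico (0:ℝ) 1)),
    |x * ((⌊x + u⌋ : ℝ) - x)| ≤ |x| := by
  filter_upwards [ae_restrict_mem measurableSet_Ico] with u hu
  rw [abs_mul]
  exact mul_le_of_le_one_right (abs_nonneg _) (aux_abs x u hu)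

lemma aux_memLp (x : ℝ) :
    MemLp (fun u : ℝ => x * ((⌊x + u⌋ : ℝ) - x)) 2 (volume.restrict (Set.Ico (0:ℝ) 1)) :=
  MemLp.of_bound (aux_meas x).aestronglyMeasurable |x| (aux_bd x)

lemma aux_var (x : ℝ) : ProbabilityTheory.variance (fun u : ℝ => x * ((⌊x + u⌋ : ℝ) - x))
    (volume.restrict (Set.Ico (0:ℝ) 1)) ≤ x ^ 2 := by
  have := ProbabilityTheory.variance_le_sq_of_bounded (a := -|x|) (b := |x|)
    (μ := volume.restrict (Set.Ico (0:ℝ) 1)) (X := fun u : ℝ => x * ((⌊x + u⌋ : ℝ) - x))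
    (by filter_upwards [aux_bd x] with u hu using abs_le.1 hu) (aux_meas x).aemeasurable
  refine this.trans (le_of_eq ?_)
  rw [← sq_abs x]; ring

lemma aux_cheb (d : ℕ) (x : Fin d → ℝ) (M N : ℝ) (hM : 0 < M) (hx : ∑ i, x i ^ 2 ≤ M ^ 2)
    (hN : M ^ 2 + 4 * M + d ≤ N ^ 2) :
    ENNReal.ofReal (1/2) ≤ auxP d {u | ∑ i, (⌊x i + u i⌋ : ℝ) ^ 2 ≤ N ^ 2} := by
  set X : Fin d → ℝ → ℝ := fun i u => x i * ((⌊x i + u⌋ : ℝ) - x i) with hX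
  set S : (Fin d → ℝ) → ℝ := ∑ i, fun u => X i (u i) with hS
  have hL : ∀ i, MemLp (fun u : Fin d → ℝ => X i (u i)) 2 (auxP d) := fun i =>
    (aux_memLp (x i)).comp_measurePreserving (measurePreserving_eval _ i)
  have hSL : MemLp S 2 (auxP d) := memLp_finsetSum' _ fun i _ => hL i
  have hmean : ∫ u, S u ∂(auxP d) = 0 := by
    simp only [hS, Finset.sum_apply]
    rw [integral_finsetSum _ fun i _ => (hL i).integrable (by norm_num)]
    apply Finset.sum_eq_zero
    intro i _
    have := (measurePreserving_eval (fun _ : Fin d => volume.restrict (Set.Ico (0:ℝ) 1)) i)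
    have h2 := integral_map (μ := auxP d) (φ := Function.eval i) (f := X i)
      (measurable_pi_apply i).aemeasurable (aux_meas (x i)).aestronglyMeasurable
    have h3 : (auxP d).map (Function.eval i) = volume.restrict (Set.Ico (0:ℝ) 1) := this.map_eq
    rw [h3] at h2
    simp only [Function.eval] at h2
    rw [← h2]
    simp only [hX]
    rw [integral_const_mul, aux_mean, mul_zero]
  have hvar : ProbabilityTheory.variance S (auxP d) ≤ M ^ 2 := by
    have := ProbabilityTheory.variance_sum_pi
      (μ := fun _ : Fin d => volume.restrict (Set.Ico (0:ℝ) 1)) (X := X)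
      (fun i => aux_memLp (x i))
    unfold auxP
    rw [hS, this]
    exact (Finset.sum_le_sum fun i _ => aux_var (x i)).trans hx
  have hch := ProbabilityTheory.meas_ge_le_variance_div_sq hSL (c := 2 * M) (by positivity)
  rw [hmean] at hch
  have hch2 : auxP d {u | 2 * M ≤ |S u - 0|} ≤ ENNReal.ofReal (1/2) := by
    refine hch.trans (ENNReal.ofReal_le_ofReal ?_)
    rw [div_le_iff₀ (by positivity)]
    nlinarith
  have hms : MeasurableSet {u | 2 * M ≤ |S u - 0|} := by
    have : Measurable S := by
      have h0 : S = fun u => ∑ i, X i (u i) := by ext u; simp [hS]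
      rw [h0]
      refine Finset.measurable_sum _ fun i _ => ?_
      exact (aux_meas (x i)).comp (measurable_pi_apply i)
    exact measurableSet_le measurable_const (by fun_prop)
  have hcube : ∀ᵐ u ∂(auxP d), ∀ i, u i ∈ Set.Ico (0:ℝ) 1 := by
    rw [ae_all_iff]
    intro i
    exact (measurePreserving_eval (fun _ : Fin d => volume.restrict (Set.Ico (0:ℝ) 1))
      i).quasiMeasurePreserving.ae (ae_restrict_mem measurableSet_Ico)
  have hc : ENNReal.ofReal (1/2) ≤ auxP d {u | 2 * M ≤ |S u - 0|}ᶜ := by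
    rw [prob_compl_eq_one_sub hms]
    refine le_trans ?_ (tsub_le_tsub_left hch2 1)
    rw [← ENNReal.ofReal_one, ← ENNReal.ofReal_sub _ (by norm_num)]
    norm_num
  refine hc.trans (measure_mono_ae ?_)
  filter_upwards [hcube] with u hu hSu
  have hSu' : |S u| < 2 * M := by
    have : ¬ (2 * M ≤ |S u - 0|) := hSu
    simpa using this
  change ∑ i, (⌊x i + u i⌋ : ℝ) ^ 2 ≤ N ^ 2
  have h1 : ∀ i, (⌊x i + u i⌋ : ℝ) ^ 2 ≤ x i ^ 2 + 2 * X i (u i) + 1 := by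
    intro i
    have := aux_abs (x i) (u i) (hu i)
    have h2 : ((⌊x i + u i⌋ : ℝ) - x i) ^ 2 ≤ 1 := by
      rw [← sq_abs]; exact pow_le_one₀ (abs_nonneg _) this
    simp only [hX]; nlinarith
  have h2 := Finset.sum_le_sum fun i (_ : i ∈ Finset.univ) => h1 i
  rw [Finset.sum_add_distrib, Finset.sum_add_distrib, ← Finset.mul_sum] at h2
  have h3 : S u = ∑ i, X i (u i) := by simp [hS]
  rw [← h3] at h2
  simp only [Finset.sum_const, Finset.card_univ, Fintype.card_fin, nsmul_eq_mul, mul_one] at h2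
  linarith [(abs_lt.1 hSu').2]

lemma aux_finite (d : ℕ) (N : ℝ) :
    {y : Fin d → ℤ | (∑ i, ((y i : ℝ)) ^ 2) ≤ N ^ 2}.Finite := by
  apply (Set.finite_Icc (fun _ : Fin d => -⌈|N|⌉) (fun _ => ⌈|N|⌉)).subset
  intro y hy
  have h : ∀ i, |(y i : ℝ)| ≤ |N| := fun i => by
    apply sq_le_sq.1
    exact (Finset.single_le_sum (f := fun i => (y i : ℝ) ^ 2) (fun i _ => sq_nonneg _)
      (Finset.mem_univ i)).trans hy
  have h2 : ∀ i, |y i| ≤ ⌈|N|⌉ := fun i => by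
    have := (h i).trans (Int.le_ceil |N|)
    exact_mod_cast this
  exact ⟨fun i => (abs_le.1 (h2 i)).1, fun i => (abs_le.1 (h2 i)).2⟩

lemma aux_count (d : ℕ) (N : ℝ) (u : Fin d → ℝ) :
    volume {x : Fin d → ℝ | ∑ i, (⌊x i + u i⌋ : ℝ) ^ 2 ≤ N ^ 2} ≤
      (Nat.card {y : Fin d → ℤ // (∑ i, ((y i : ℝ)) ^ 2) ≤ N ^ 2} : ℝ≥0∞) := by
  set F := (aux_finite d N).toFinset with hF
  have hcard : Nat.card {y : Fin d → ℤ // (∑ i, ((y i : ℝ)) ^ 2) ≤ N ^ 2} = F.card :=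
    Nat.card_eq_card_finite_toFinset (aux_finite d N)
  rw [hcard]
  have hsub : {x : Fin d → ℝ | ∑ i, (⌊x i + u i⌋ : ℝ) ^ 2 ≤ N ^ 2} ⊆
      ⋃ y ∈ F, Set.pi Set.univ (fun i => Set.Ico ((y i : ℝ) - u i) ((y i : ℝ) + 1 - u i)) := by
    intro x hx
    simp only [Set.mem_iUnion]
    refine ⟨fun i => ⌊x i + u i⌋, ?_, ?_⟩
    · rw [hF, Set.Finite.mem_toFinset]; exact hx
    · intro i _
      have h1 := Int.floor_le (x i + u i)
      have h2 := Int.lt_floor_add_one (x i + u i)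
      constructor <;> simp only <;> linarith
  refine (measure_mono hsub).trans ((measure_biUnion_finset_le _ _).trans ?_)
  simp_rw [Real.volume_pi_Ico]
  simp

lemma aux_main (d : ℕ) (M N : ℝ) (hM : 0 < M) (hN : M ^ 2 + 4 * M + d ≤ N ^ 2) :
    ENNReal.ofReal (1/2) * volume {x : Fin d → ℝ | ∑ i, x i ^ 2 ≤ M ^ 2} ≤
      (Nat.card {y : Fin d → ℤ // (∑ i, ((y i : ℝ)) ^ 2) ≤ N ^ 2} : ℝ≥0∞) := by
  set E : Set ((Fin d → ℝ) × (Fin d → ℝ)) :=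
    {p | ∑ i, (⌊p.1 i + p.2 i⌋ : ℝ) ^ 2 ≤ N ^ 2} with hE
  have hEm : MeasurableSet E := by
    refine measurableSet_le ?_ measurable_const
    refine Finset.measurable_sum _ fun i _ => ?_
    refine Measurable.pow_const ?_ 2
    refine (measurable_from_top (f := fun n : ℤ => (n:ℝ))).comp (Int.measurable_floor.comp ?_)
    fun_prop
  have hBm : MeasurableSet {x : Fin d → ℝ | ∑ i, x i ^ 2 ≤ M ^ 2} :=
    measurableSet_le (by fun_prop) measurable_const
  calc _ = ∫⁻ x in {x : Fin d → ℝ | ∑ i, x i ^ 2 ≤ M ^ 2}, ENNReal.ofReal (1/2) := by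
        rw [setLIntegral_const]
    _ ≤ ∫⁻ x in {x : Fin d → ℝ | ∑ i, x i ^ 2 ≤ M ^ 2}, auxP d (Prod.mk x ⁻¹' E) :=
        setLIntegral_mono' hBm fun x hx => aux_cheb d x M N hM hx hN
    _ ≤ ∫⁻ x : Fin d → ℝ, auxP d (Prod.mk x ⁻¹' E) := setLIntegral_le_lintegral _ _
    _ = (volume.prod (auxP d)) E := (Measure.prod_apply hEm).symm
    _ = ∫⁻ u, volume ((fun x => (x, u)) ⁻¹' E) ∂(auxP d) := Measure.prod_apply_symm hEm
    _ ≤ ∫⁻ u, (Nat.card {y : Fin d → ℤ // (∑ i, ((y i : ℝ)) ^ 2) ≤ N ^ 2} : ℝ≥0∞) ∂(auxP d) :=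
        lintegral_mono fun u => aux_count d N u
    _ = _ := by simp

/-- There are absolute constants `C₁, C₂ > 0`, independent of the dimension, such that for
every `d ≥ 1` and every real `N ≥ C₁ d` one has `|B²_N| ≤ C₂ ⋅ #(B²_N ∩ ℤ^d)`. -/
theorem statement18 :
    ∃ C₁ : ℝ, 0 < C₁ ∧ ∃ C₂ : ℝ, 0 < C₂ ∧
      ∀ d : ℕ, 1 ≤ d → ∀ N : ℝ, C₁ * d ≤ N →
        volume (Metric.closedBall (0 : EuclideanSpace ℝ (Fin d)) N)
          ≤ ENNReal.ofReal C₂ *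
            (Nat.card {y : Fin d → ℤ // (∑ i, ((y i : ℝ)) ^ 2) ≤ N ^ 2} : ℝ≥0∞) := by
  refine ⟨6, by norm_num, 6, by norm_num, fun d hd N hN => ?_⟩
  have hd' : (1:ℝ) ≤ d := by exact_mod_cast hd
  have hM : 0 < N - 3 := by linarith
  have hmain := aux_main d (N - 3) N hM (by nlinarith)
  have hball : volume {x : Fin d → ℝ | ∑ i, x i ^ 2 ≤ (N - 3) ^ 2} =
      volume (Metric.closedBall (0 : EuclideanSpace ℝ (Fin d)) (N - 3)) := by
    rw [← (PiLp.volume_preserving_toLp (Fin d)).measure_preimage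
      measurableSet_closedBall.nullMeasurableSet]
    rw [EuclideanSpace.closedBall_zero_eq _ hM.le]
    rfl
  rw [hball] at hmain
  have hratio : N ^ d ≤ 3 * (N - 3) ^ d := by
    have h1 : N ≤ (1 + 1 / (d:ℝ)) * (N - 3) := by
      have : 3 ≤ 1 / (d:ℝ) * (N - 3) := by
        rw [div_mul_eq_mul_div, le_div_iff₀ (by linarith)]; linarith
      linarith
    have h2 : (1 + 1 / (d:ℝ)) ^ d ≤ 3 := by
      calc (1 + 1 / (d:ℝ)) ^ d ≤ (Real.exp (1 / (d:ℝ))) ^ d := by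
            gcongr
            linarith [Real.add_one_le_exp (1 / (d:ℝ))]
        _ = Real.exp 1 := by
            rw [← Real.exp_nat_mul]; congr 1; field_simp
        _ ≤ 3 := by linarith [Real.exp_one_lt_d9]
    calc N ^ d ≤ ((1 + 1 / (d:ℝ)) * (N - 3)) ^ d := by gcongr; linarith
      _ = (1 + 1 / (d:ℝ)) ^ d * (N - 3) ^ d := mul_pow _ _ _
      _ ≤ _ := by gcongr
  have hvol : volume (Metric.closedBall (0 : EuclideanSpace ℝ (Fin d)) N) ≤
      ENNReal.ofReal 3 * volume (Metric.closedBall (0 : EuclideanSpace ℝ (Fin d)) (N - 3)) := by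
    rw [Measure.addHaar_closedBall _ _ (by linarith : 0 ≤ N),
      Measure.addHaar_closedBall _ _ hM.le, ← mul_assoc, ← ENNReal.ofReal_mul (by norm_num)]
    gcongr
    simpa using hratio
  refine hvol.trans ?_
  have h6 : ENNReal.ofReal 3 = ENNReal.ofReal 6 * ENNReal.ofReal (1/2) := by
    rw [← ENNReal.ofReal_mul (by norm_num)]; norm_num
  rw [h6, mul_assoc]
  gcongr
end
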